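/- For every integer j ≥ 0, all complex numbers c₁, c₂, and every integer k ≥ 2, there exist a finite index set I, and for each i ∈ I nonnegative integers j₁ⁱ, j₂ⁱ, j₃ⁱ with j₁ⁱ + j₂ⁱ + j₃ⁱ = k + j − 2 and complex numbers a₁ⁱ, b₁ⁱ, a₂ⁱ, b₂ⁱ, a₃ⁱ, b₃ⁱ, such that for every smooth complex-valued 2π-periodic function u with zero mean: ∫₀^{2π} ((c₁ + c₂H)∂ₓ^{j} u)·w_k^Q(u) dx = Σ_{i∈I} ∫₀^{2π} ((a₁ⁱ + b₁ⁱH)∂ₓ^{j₁ⁱ} u)·((a₂ⁱ + b₂ⁱH)∂ₓ^{j₂ⁱ} u)·((a₃ⁱ + b₃ⁱH)∂ₓ^{j₃ⁱ} u) dx. -/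

import Mathlib

/-- `n`-th Fourier coefficient of a `2π`-periodic function. -/
noncomputable def fourierCoef (f : ℝ → ℂ) (n : ℤ) : ℂ :=
  (1 / (2 * Real.pi)) * ∫ x in (0:ℝ)..(2 * Real.pi), f x * Complex.exp (-Complex.I * n * x)

/-- Projection `P₋` onto negative Fourier modes (via the Fourier series). -/
noncomputable def Pminus (f : ℝ → ℂ) : ℝ → ℂ :=
  fun x => ∑' n : ℤ, if n < 0 then fourierCoef f n * Complex.exp (Complex.I * n * x) else 0

/-- The Matsuno densities: `w₁(u) = u` and for `n ≥ 2`
`wₙ(u) = i·P₋∂ₓ w_{n-1}(u) − Σ_{k=2}^n ((−1)^{k+1}/k!)·Σ_{j₁+⋯+j_k=n, jᵢ≥1} w_{j₁}(u)⋯w_{j_k}(u)`. -/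
noncomputable def matsunoW (u : ℝ → ℂ) : ℕ → ℝ → ℂ := fun n =>
  Nat.strongRecOn n fun n prev =>
    if n = 0 then fun _ => 0
    else if n = 1 then u
    else
      let W : ℕ → ℝ → ℂ := fun m => if hm : m < n then prev m hm else fun _ => 0
      fun x =>
        Complex.I * Pminus (deriv (W (n - 1))) x -
          ∑ k ∈ Finset.Icc 2 n, ((-1 : ℂ) ^ (k + 1) / (Nat.factorial k : ℂ)) *
            ∑ j ∈ (Finset.Nat.antidiagonalTuple k n).filter (fun j => ∀ i, 1 ≤ j i),
              ∏ i, W (j i) x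

/-- The Hilbert transform `H(e^{inx}) = -i·sgn(n)·e^{inx}` (via the Fourier series). -/
noncomputable def HilbT (f : ℝ → ℂ) : ℝ → ℂ :=
  fun x => ∑' n : ℤ, (-Complex.I * (n.sign : ℂ)) * fourierCoef f n *
    Complex.exp (Complex.I * n * x)

/-- The operator `Λ^j = (c₁ + c₂·H)∂ₓ^j`. -/
noncomputable def Lam (c₁ c₂ : ℂ) (j : ℕ) (u : ℝ → ℂ) : ℝ → ℂ :=
  fun x => c₁ * deriv^[j] u x + c₂ * HilbT (deriv^[j] u) x

/-- The quadratic part `w_k^Q(u) = ½·(d²/dt²)|_{t=0} w_k(tu)`. -/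
noncomputable def wQuad (u : ℝ → ℂ) (k : ℕ) (x : ℝ) : ℂ :=
  iteratedDeriv 2 (fun t : ℝ => matsunoW (fun y => (t : ℂ) * u y) k x) 0 / 2

/-!
Put `D = i·P₋∂ₓ`. The recursion makes `wₙ(t·u)` a polynomial in `t` without constant term, so only
products of two factors contribute to its coefficient of `t²`. Its linear part is therefore
`Dⁿ⁻¹u`, and the quadratic part of `w_{k+2}` is `½·Σ_{l+m+n=k} D^l (D^m u · D^n u)`.

Off the zero Fourier mode `H² = -1` and `D = ½(i + H)∂ₓ`, and a single `∂ₓ` kills the zero mode. So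
the operators `(a + b·H)∂ₓ^s` are closed under composition as long as a derivative is present, and,
`H` and `∂ₓ` being antisymmetric, under transposition with respect to `∫ f·g`. Moving `D^l` onto
the factor `(c₁ + c₂·H)∂ₓ^j u` turns each term of the triple sum into a single cubic integral.
-/

open Complex Polynomial
open Finset.HasAntidiagonal (antidiagonal)
open Finset.Nat (antidiagonalTuple)
open scoped ContDiff

section MatsunoRecursion

variable (𝕜 : Type*) {A B : Type*} [Field 𝕜] [CommRing A] [Algebra 𝕜 A] [CommRing B] [Algebra 𝕜 B]

/-- The nonlinear term `Σ_{k=2}^n ((−1)^{k+1}/k!)·Σ_{j₁+⋯+j_k=n, jᵢ≥1} w_{j₁}⋯w_{j_k}` of the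
Matsuno recursion, for a sequence `w` in an arbitrary commutative algebra. -/
def matsunoNonlinear (n : ℕ) (w : ℕ → A) : A :=
  ∑ k ∈ Finset.Icc 2 n, ((-1 : 𝕜) ^ (k + 1) / (k.factorial : 𝕜)) •
    ∑ j ∈ (antidiagonalTuple k n).filter (fun j => ∀ i, 1 ≤ j i), ∏ i, w (j i)

/-- The Matsuno recursion `wₙ = D wₙ₋₁ − matsunoNonlinear n w`, started at `w₁ = u`, for an
arbitrary operator `D` in place of `i·P₋∂ₓ`. -/
def matsunoSeq (D : A → A) (u : A) : ℕ → A
  | 0 => 0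
  | 1 => u
  | n + 2 => D (matsunoSeq D u (n + 1)) -
      matsunoNonlinear 𝕜 (n + 2) fun m => if m < n + 2 then matsunoSeq D u m else 0

lemma lt_of_mem_filter_antidiagonalTuple {k n : ℕ} (hk : 2 ≤ k) {j : Fin k → ℕ}
    (hj : j ∈ (antidiagonalTuple k n).filter fun j => ∀ i, 1 ≤ j i) (i : Fin k) : j i < n := by
  rw [Finset.mem_filter, Finset.Nat.mem_antidiagonalTuple] at hj
  have : Nontrivial (Fin k) := Fin.nontrivial_iff_two_le.2 hk
  obtain ⟨l, hl⟩ := exists_ne i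
  rw [← hj.1]
  exact Finset.single_lt_sum hl (Finset.mem_univ _) (Finset.mem_univ _) (hj.2 l)
    fun _ _ _ => Nat.zero_le _

lemma matsunoNonlinear_congr {n : ℕ} {w w' : ℕ → A} (h : ∀ m < n, w m = w' m) :
    matsunoNonlinear 𝕜 n w = matsunoNonlinear 𝕜 n w' := by
  refine Finset.sum_congr rfl fun k hk => congrArg _ (Finset.sum_congr rfl fun j hj => ?_)
  exact Finset.prod_congr rfl fun i _ =>
    h _ (lt_of_mem_filter_antidiagonalTuple (Finset.mem_Icc.1 hk).1 hj i)

lemma map_matsunoNonlinear (φ : A →ₐ[𝕜] B) (n : ℕ) (w : ℕ → A) :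
    φ (matsunoNonlinear 𝕜 n w) = matsunoNonlinear 𝕜 n fun m => φ (w m) := by
  simp only [matsunoNonlinear, map_sum, map_smul, map_prod]

lemma matsunoSeq_zero (D : A → A) (u : A) : matsunoSeq 𝕜 D u 0 = 0 := by
  rw [matsunoSeq]

lemma matsunoSeq_one (D : A → A) (u : A) : matsunoSeq 𝕜 D u 1 = u := by
  rw [matsunoSeq]

lemma matsunoSeq_add_two (D : A → A) (u : A) (n : ℕ) :
    matsunoSeq 𝕜 D u (n + 2) =
      D (matsunoSeq 𝕜 D u (n + 1)) - matsunoNonlinear 𝕜 (n + 2) (matsunoSeq 𝕜 D u) := by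
  rw [matsunoSeq]
  exact congrArg _ (matsunoNonlinear_congr 𝕜 fun m hm => if_pos hm)

lemma map_matsunoSeq (φ : A →ₐ[𝕜] B) {D : A → A} {D' : B → B} (hφ : ∀ a, φ (D a) = D' (φ a))
    (u : A) (n : ℕ) : φ (matsunoSeq 𝕜 D u n) = matsunoSeq 𝕜 D' (φ u) n := by
  induction n using Nat.strong_induction_on with
  | _ n ih =>
  match n with
  | 0 => rw [matsunoSeq_zero, matsunoSeq_zero, map_zero]
  | 1 => rw [matsunoSeq_one, matsunoSeq_one]
  | n + 2 =>
    rw [matsunoSeq_add_two, matsunoSeq_add_two, map_sub, hφ, ih _ (by lia), map_matsunoNonlinear,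
      matsunoNonlinear_congr 𝕜 ih]

lemma matsunoW_eq_matsunoSeq (u : ℝ → ℂ) (n : ℕ) :
    matsunoW u n = matsunoSeq ℂ (fun f => I • Pminus (deriv f)) u n := by
  induction n using Nat.strong_induction_on with
  | _ n ih =>
  rw [matsunoW, Nat.strongRecOn_eq]
  match n with
  | 0 => rw [if_pos rfl, matsunoSeq_zero]; rfl
  | 1 => rw [if_neg one_ne_zero, if_pos rfl, matsunoSeq_one]
  | n + 2 =>
    rw [if_neg (by lia), if_neg (by lia), matsunoSeq_add_two, ← ih _ (by lia),
      ← matsunoNonlinear_congr ℂ ih]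
    funext x
    simp only [matsunoNonlinear, Pi.sub_apply, Pi.smul_apply, smul_eq_mul, Finset.sum_apply,
      Finset.prod_apply]
    rw [dif_pos (show n + 2 - 1 < n + 2 by lia)]
    refine congrArg _ (Finset.sum_congr rfl fun k hk => congrArg _ ?_)
    refine Finset.sum_congr rfl fun j hj => Finset.prod_congr rfl fun i _ => ?_
    rw [dif_pos (lt_of_mem_filter_antidiagonalTuple (Finset.mem_Icc.1 hk).1 hj i)]
    rfl

end MatsunoRecursion

section LowOrderCoefficients

section Nonlinear

variable (𝕜 : Type*) {A : Type*} [Field 𝕜] [CommRing A] [Algebra 𝕜 A]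

lemma coeff_prod_eq_zero_of_lt_card {R ι : Type*} [CommSemiring R] {s : Finset ι} {p : ι → R[X]}
    (hp : ∀ i ∈ s, (p i).coeff 0 = 0) {d : ℕ} (hd : d < s.card) : (∏ i ∈ s, p i).coeff d = 0 := by
  refine X_pow_dvd_iff.1 ?_ d hd
  rw [← Finset.prod_const]
  exact Finset.prod_dvd_prod_of_dvd _ _ fun i hi => X_dvd_iff.2 (hp i hi)

lemma coeff_mul_two_of_coeff_zero {R : Type*} [Semiring R] {p q : R[X]} (hp : p.coeff 0 = 0)
    (hq : q.coeff 0 = 0) : (p * q).coeff 2 = p.coeff 1 * q.coeff 1 := by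
  simp [coeff_mul, Finset.Nat.antidiagonal_succ, hp, hq]

lemma coeff_sum_prod_eq_zero {n k d : ℕ} {w : ℕ → A[X]} (hw : ∀ m < n, (w m).coeff 0 = 0)
    (hk : 2 ≤ k) (hd : d < k) :
    (∑ j ∈ (antidiagonalTuple k n).filter (fun j => ∀ i, 1 ≤ j i),
      ∏ i, w (j i)).coeff d = 0 := by
  rw [finsetSum_coeff]
  refine Finset.sum_eq_zero fun j hj => coeff_prod_eq_zero_of_lt_card (fun i _ => ?_) (by simpa)
  exact hw _ (lt_of_mem_filter_antidiagonalTuple hk hj i)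

lemma coeff_matsunoNonlinear_eq_zero {n d : ℕ} {w : ℕ → A[X]} (hw : ∀ m < n, (w m).coeff 0 = 0)
    (hd : d < 2) : (matsunoNonlinear 𝕜 n w).coeff d = 0 := by
  rw [matsunoNonlinear, finsetSum_coeff]
  refine Finset.sum_eq_zero fun k hk => ?_
  have hk := (Finset.mem_Icc.1 hk).1
  rw [coeff_smul, coeff_sum_prod_eq_zero hw hk (hd.trans_le hk), smul_zero]

lemma sum_filter_antidiagonalTuple_two {M : Type*} [AddCommMonoid M] (f : (Fin 2 → ℕ) → M)
    (n : ℕ) :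
    ∑ j ∈ (antidiagonalTuple 2 (n + 2)).filter (fun j => ∀ i, 1 ≤ j i), f j =
      ∑ p ∈ antidiagonal n, f ![p.1 + 1, p.2 + 1] := by
  simp [Finset.sum_filter, Finset.Nat.antidiagonalTuple_two, Finset.Nat.antidiagonal_succ_succ']

lemma coeff_two_matsunoNonlinear {n : ℕ} {w : ℕ → A[X]} (hw : ∀ m < n + 2, (w m).coeff 0 = 0) :
    (matsunoNonlinear 𝕜 (n + 2) w).coeff 2 =
      -(1 / 2 : 𝕜) • ∑ p ∈ antidiagonal n, (w (p.1 + 1)).coeff 1 * (w (p.2 + 1)).coeff 1 := by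
  rw [matsunoNonlinear, finsetSum_coeff,
    Finset.sum_eq_single_of_mem 2 (Finset.mem_Icc.2 ⟨le_rfl, by lia⟩) fun k hk hk2 => ?_]
  · rw [coeff_smul, sum_filter_antidiagonalTuple_two, finsetSum_coeff]
    congr 1
    · rw [Nat.factorial_two]; push_cast; ring
    · refine Finset.sum_congr rfl fun p hp => ?_
      have := Finset.HasAntidiagonal.mem_antidiagonal.1 hp
      simpa using coeff_mul_two_of_coeff_zero (hw (p.1 + 1) (by lia)) (hw (p.2 + 1) (by lia))
  · have hk := (Finset.mem_Icc.1 hk).1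
    rw [coeff_smul, coeff_sum_prod_eq_zero hw hk (by lia), smul_zero]

end Nonlinear

variable {𝕜 A : Type*} [Field 𝕜] [CommRing A] [Algebra 𝕜 A]

/-- The coefficientwise action of a linear operator on polynomials. -/
noncomputable def mapCoeff (D : A →ₗ[𝕜] A) (p : A[X]) : A[X] :=
  p.sum fun d a => monomial d (D a)

@[simp]
lemma coeff_mapCoeff (D : A →ₗ[𝕜] A) (p : A[X]) (d : ℕ) :
    (mapCoeff D p).coeff d = D (p.coeff d) := by
  simp +contextual [mapCoeff, sum_def, coeff_monomial]

lemma eval_algebraMap_mapCoeff (D : A →ₗ[𝕜] A) (p : A[X]) (t : 𝕜) :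
    (mapCoeff D p).eval (algebraMap 𝕜 A t) = D (p.eval (algebraMap 𝕜 A t)) := by
  rw [mapCoeff, sum_def, eval_finsetSum, eval_eq_sum, sum_def, map_sum]
  refine Finset.sum_congr rfl fun d _ => ?_
  rw [eval_monomial, ← map_pow, mul_comm, ← Algebra.smul_def, mul_comm, ← Algebra.smul_def,
    map_smul]

/-- The Matsuno sequence of `t·u` as a polynomial in `t`. -/
noncomputable def matsunoPoly (D : A →ₗ[𝕜] A) (u : A) : ℕ → A[X] :=
  matsunoSeq 𝕜 (mapCoeff D) (C u * X)

lemma eval_algebraMap_matsunoPoly (D : A →ₗ[𝕜] A) (u : A) (n : ℕ) (t : 𝕜) :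
    (matsunoPoly D u n).eval (algebraMap 𝕜 A t) = matsunoSeq 𝕜 D (t • u) n := by
  have h := map_matsunoSeq 𝕜 ((aeval (R := A) (algebraMap 𝕜 A t)).restrictScalars 𝕜)
    (fun p => eval_algebraMap_mapCoeff D p t) (C u * X) n
  simpa only [matsunoPoly, AlgHom.restrictScalars_apply, coe_aeval_eq_eval, eval_mul, eval_C,
    eval_X, mul_comm u, ← Algebra.smul_def] using h

lemma coeff_zero_matsunoPoly (D : A →ₗ[𝕜] A) (u : A) (n : ℕ) : (matsunoPoly D u n).coeff 0 = 0 := by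
  induction n using Nat.strong_induction_on with
  | _ n ih =>
  match n with
  | 0 => simp [matsunoPoly, matsunoSeq_zero]
  | 1 => simp [matsunoPoly, matsunoSeq_one]
  | n + 2 =>
    rw [matsunoPoly, matsunoSeq_add_two, coeff_sub, coeff_mapCoeff]
    rw [← matsunoPoly, ih _ (by lia), coeff_matsunoNonlinear_eq_zero 𝕜 ih two_pos, map_zero,
      sub_zero]

lemma coeff_one_matsunoPoly_succ (D : Module.End 𝕜 A) (u : A) (n : ℕ) :
    (matsunoPoly D u (n + 1)).coeff 1 = (D ^ n) u := by
  induction n with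
  | zero => simp [matsunoPoly, matsunoSeq_one]
  | succ n ih =>
    rw [matsunoPoly, matsunoSeq_add_two, coeff_sub, coeff_mapCoeff, ← matsunoPoly, ih,
      coeff_matsunoNonlinear_eq_zero 𝕜 (fun _ _ => coeff_zero_matsunoPoly D u _) one_lt_two,
      sub_zero, pow_succ', Module.End.mul_apply]

lemma coeff_two_matsunoPoly_add_two (D : Module.End 𝕜 A) (u : A) (n : ℕ) :
    (matsunoPoly D u (n + 2)).coeff 2 = D ((matsunoPoly D u (n + 1)).coeff 2) +
      (1 / 2 : 𝕜) • ∑ p ∈ antidiagonal n, (D ^ p.1) u * (D ^ p.2) u := by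
  rw [matsunoPoly, matsunoSeq_add_two, coeff_sub, coeff_mapCoeff, ← matsunoPoly,
    coeff_two_matsunoNonlinear 𝕜 fun _ _ => coeff_zero_matsunoPoly D u _, neg_smul, sub_neg_eq_add]
  simp only [coeff_one_matsunoPoly_succ]

lemma coeff_two_matsunoPoly_eq_sum (D : Module.End 𝕜 A) (u : A) (n : ℕ) :
    (matsunoPoly D u (n + 2)).coeff 2 = (1 / 2 : 𝕜) • ∑ p ∈ antidiagonal n,
      (D ^ p.1) (∑ q ∈ antidiagonal p.2, (D ^ q.1) u * (D ^ q.2) u) := by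
  induction n with
  | zero => rw [coeff_two_matsunoPoly_add_two]; simp [matsunoPoly, matsunoSeq_one]
  | succ n ih =>
    rw [coeff_two_matsunoPoly_add_two, ih, map_smul, map_sum, add_comm, ← smul_add]
    refine congrArg _ (Eq.trans ?_ Finset.Nat.sum_antidiagonal_succ.symm)
    simp only [pow_zero, Module.End.one_apply, pow_succ', Module.End.mul_apply]

end LowOrderCoefficients

section FourierSeries

lemma norm_exp_I_mul_intCast_mul (n : ℤ) (x : ℝ) : ‖exp (I * n * x)‖ = 1 := by
  simpa [mul_assoc] using norm_exp_I_mul_ofReal (n * x)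

lemma exp_I_mul_intCast_mul_periodic (n : ℤ) :
    Function.Periodic (fun x : ℝ => exp (I * n * x)) (2 * Real.pi) := fun x => by
  rw [exp_eq_exp_iff_exists_int]
  exact ⟨n, by push_cast; ring⟩

lemma hasDerivAt_exp_const_mul_ofReal (c : ℂ) (x : ℝ) :
    HasDerivAt (fun x : ℝ => exp (c * x)) (c * exp (c * x)) x := by
  simpa [mul_comm] using ((hasDerivAt_id (x : ℂ)).const_mul c).cexp.comp_ofReal

lemma iteratedDeriv_const_mul_exp (a c : ℂ) (k : ℕ) :
    iteratedDeriv k (fun x : ℝ => a * exp (c * x)) = fun x : ℝ => a * c ^ k * exp (c * x) := by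
  induction k with
  | zero => simp
  | succ k ih =>
    funext x
    rw [iteratedDeriv_succ, ih, ((hasDerivAt_exp_const_mul_ofReal c x).const_mul _).deriv]
    ring

lemma integral_mul_exp_eq_fourierCoef (f : ℝ → ℂ) (n : ℤ) :
    ∫ x in (0:ℝ)..(2 * Real.pi), f x * exp (I * n * x) = 2 * Real.pi * fourierCoef f (-n) := by
  have hpi : (Real.pi : ℂ) ≠ 0 := by exact_mod_cast Real.pi_ne_zero
  rw [fourierCoef]
  push_cast
  simp only [neg_mul_neg]
  field_simp

lemma fourierCoef_exp (m n : ℤ) :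
    fourierCoef (fun x => exp (I * n * x)) m = if n = m then 1 else 0 := by
  have hpi : (Real.pi : ℂ) ≠ 0 := by exact_mod_cast Real.pi_ne_zero
  have h : ∀ x : ℝ, exp (I * n * x) * exp (-I * m * x) = exp (I * (n - m : ℤ) * x) := fun x => by
    rw [← exp_add]; push_cast; ring_nf
  simp only [fourierCoef, h]
  split_ifs with hnm
  · simp only [hnm, sub_self, Int.cast_zero, mul_zero, zero_mul, exp_zero,
      intervalIntegral.integral_const, sub_zero, real_smul, mul_one]
    push_cast
    field_simp
  · have hc : I * ((n - m : ℤ) : ℂ) ≠ 0 := by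
      simpa only [ne_eq, mul_eq_zero, I_ne_zero, false_or, Int.cast_eq_zero, sub_eq_zero] using hnm
    have hper := (exp_I_mul_intCast_mul_periodic (n - m)).eq
    rw [integral_exp_mul_complex hc, hper, sub_self, zero_div, mul_zero]

lemma norm_fourierCoef_le (f : ℝ → ℂ) (n : ℤ) :
    ‖fourierCoef f n‖ ≤ ‖(1 / (2 * Real.pi) : ℂ)‖ * ∫ x in (0:ℝ)..(2 * Real.pi), ‖f x‖ := by
  rw [fourierCoef, norm_mul]
  gcongr
  refine (intervalIntegral.norm_integral_le_integral_norm (by positivity)).trans_eq ?_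
  refine intervalIntegral.integral_congr fun x _ => ?_
  have hexp : ‖exp (-I * n * x)‖ = 1 := by simpa using norm_exp_I_mul_intCast_mul (-n) x
  simp only [norm_mul, hexp, mul_one]

lemma fourierCoef_add {f g : ℝ → ℂ} (hf : Continuous f) (hg : Continuous g) (n : ℤ) :
    fourierCoef (f + g) n = fourierCoef f n + fourierCoef g n := by
  simp only [fourierCoef, Pi.add_apply, add_mul]
  rw [intervalIntegral.integral_add, mul_add] <;>
    exact Continuous.intervalIntegrable (by fun_prop) _ _

lemma fourierCoef_smul (c : ℂ) (f : ℝ → ℂ) (n : ℤ) :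
    fourierCoef (c • f) n = c * fourierCoef f n := by
  simp only [fourierCoef, Pi.smul_apply, smul_eq_mul, mul_assoc,
    intervalIntegral.integral_const_mul]
  ring

lemma fourierCoef_deriv {f : ℝ → ℂ} (hf : ContDiff ℝ 1 f) (hper : f (2 * Real.pi) = f 0) (n : ℤ) :
    fourierCoef (deriv f) n = I * n * fourierCoef f n := by
  have hexp : exp (-I * n * (2 * Real.pi : ℝ)) = exp (-I * n * (0 : ℝ)) := by
    simpa using (exp_I_mul_intCast_mul_periodic (-n)).eq
  have hparts := intervalIntegral.integral_mul_deriv_eq_deriv_mul (a := 0) (b := 2 * Real.pi)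
    (fun x _ => (hf.differentiable one_ne_zero x).hasDerivAt)
    (fun x _ => hasDerivAt_exp_const_mul_ofReal (-I * n) x)
    ((hf.continuous_deriv le_rfl).intervalIntegrable _ _)
    (Continuous.intervalIntegrable (by fun_prop) _ _)
  rw [hper, hexp, sub_self, zero_sub] at hparts
  simp only [mul_left_comm (f _), intervalIntegral.integral_const_mul] at hparts
  rw [fourierCoef, fourierCoef]
  linear_combination (1 / (2 * Real.pi) : ℂ) * hparts

lemma fourierCoeff_lift_eq_fourierCoef [Fact (0 < 2 * Real.pi)] {f : ℝ → ℂ}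
    (hf : Function.Periodic f (2 * Real.pi)) (n : ℤ) :
    fourierCoeff hf.lift n = fourierCoef f n := by
  have hpi : (Real.pi : ℂ) ≠ 0 := by exact_mod_cast Real.pi_ne_zero
  rw [fourierCoeff_eq_intervalIntegral _ _ 0, fourierCoef, real_smul, zero_add]
  push_cast
  refine congrArg _ (intervalIntegral.integral_congr fun x _ => ?_)
  simp only [fourier_coe_apply, Function.Periodic.lift_coe, smul_eq_mul]
  rw [mul_comm]
  congr 2
  push_cast
  field_simp

lemma hasSum_fourierCoef_mul_exp {f : ℝ → ℂ} (hf : Continuous f)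
    (hper : Function.Periodic f (2 * Real.pi)) (hs : Summable (fourierCoef f)) (x : ℝ) :
    HasSum (fun n : ℤ => fourierCoef f n * exp (I * n * x)) (f x) := by
  have : Fact (0 < 2 * Real.pi) := ⟨Real.two_pi_pos⟩
  have hpi : (Real.pi : ℂ) ≠ 0 := by exact_mod_cast Real.pi_ne_zero
  let g : C(AddCircle (2 * Real.pi), ℂ) := ⟨hper.lift, hf.quotient_liftOn' _⟩
  have hg : fourierCoeff g = fourierCoef f := funext (fourierCoeff_lift_eq_fourierCoef hper)
  have h := has_pointwise_sum_fourier_series_of_summable (f := g) (hg ▸ hs) x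
  convert! h using 2 with n
  rw [hg, fourier_coe_apply, smul_eq_mul]
  congr 2
  push_cast
  field_simp

lemma hasSum_integral_mul_tsum {a : ℤ → ℂ} (ha : Summable a) {f : ℝ → ℂ} (hf : Continuous f) :
    HasSum (fun n : ℤ => a n * (2 * Real.pi * fourierCoef f (-n)))
      (∫ x in (0:ℝ)..(2 * Real.pi), f x * ∑' n : ℤ, a n * exp (I * n * x)) := by
  let F : ℤ → C(ℝ, ℂ) := fun n => ⟨fun x => f x * (a n * exp (I * n * x)), by fun_prop⟩
  obtain ⟨M, hM⟩ := (isCompact_uIcc (a := (0:ℝ)) (b := 2 * Real.pi)).exists_bound_of_continuousOn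
    hf.continuousOn
  have hM0 : 0 ≤ M := (norm_nonneg _).trans (hM 0 Set.left_mem_uIcc)
  have hF := intervalIntegral.hasSum_intervalIntegral_of_summable_norm (a := 0)
    (b := 2 * Real.pi) (f := F) <| by
    refine Summable.of_nonneg_of_le (fun _ => norm_nonneg _) (fun n => ?_) (ha.norm.mul_left M)
    refine (ContinuousMap.norm_le _ (by positivity)).2 fun x => ?_
    simp only [ContinuousMap.restrict_apply, F, ContinuousMap.coe_mk, norm_mul,
      norm_exp_I_mul_intCast_mul, mul_one]
    gcongr
    exact hM _ x.2
  simp only [F, ContinuousMap.coe_mk, tsum_mul_left] at hF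
  convert! hF using 2 with n
  simp only [mul_left_comm (f _), intervalIntegral.integral_const_mul,
    integral_mul_exp_eq_fourierCoef]

lemma fourierCoef_tsum_mul_exp {a : ℤ → ℂ} (ha : Summable a) (m : ℤ) :
    fourierCoef (fun x : ℝ => ∑' n : ℤ, a n * exp (I * n * x)) m = a m := by
  have hpi : (Real.pi : ℂ) ≠ 0 := by exact_mod_cast Real.pi_ne_zero
  have h := hasSum_integral_mul_tsum ha (f := fun x : ℝ => exp (I * (-m : ℤ) * x)) (by fun_prop)
  simp only [fourierCoef_exp, neg_inj, mul_ite, mul_zero, mul_one, eq_comm (a := m)] at h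
  have hm := h.tsum_eq
  rw [tsum_ite_eq] at hm
  push_cast at hm
  simp only [fourierCoef, mul_comm _ (exp (-I * m * _))]
  simp only [neg_mul, mul_neg] at hm ⊢
  rw [← hm]
  field_simp

end FourierSeries

/-- The algebra of smooth `2π`-periodic functions `ℝ → ℂ`, the phase space of the Matsuno
densities. -/
def smoothPeriodic : Subalgebra ℂ (ℝ → ℂ) where
  carrier := {f | ContDiff ℝ ∞ f ∧ Function.Periodic f (2 * Real.pi)}
  mul_mem' hf hg := ⟨hf.1.mul hg.1, hf.2.mul hg.2⟩
  add_mem' hf hg := ⟨hf.1.add hg.1, hf.2.add hg.2⟩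
  algebraMap_mem' _ := ⟨contDiff_const, fun _ => rfl⟩

namespace smoothPeriodic

lemma continuous (f : smoothPeriodic) : Continuous (f : ℝ → ℂ) :=
  f.2.1.continuous

/-- Differentiation as an endomorphism of the smooth periodic functions. -/
noncomputable def derivOp : Module.End ℂ smoothPeriodic where
  toFun f := ⟨deriv f, (contDiff_infty_iff_deriv.1 f.2.1).2, fun x => by
    rw [← deriv_comp_add_const, funext f.2.2]⟩
  map_add' f g := Subtype.ext <| funext fun x =>
    deriv_add (f.2.1.differentiable (by simp) x) (g.2.1.differentiable (by simp) x)
  map_smul' c f := Subtype.ext <| funext fun x =>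
    deriv_const_smul c (f.2.1.differentiable (by simp) x)

lemma coe_derivOp_pow (f : smoothPeriodic) (k : ℕ) :
    ((derivOp ^ k) f : ℝ → ℂ) = deriv^[k] f := by
  induction k with
  | zero => rfl
  | succ k ih => rw [pow_succ', Function.iterate_succ_apply', ← ih]; rfl

lemma fourierCoef_derivOp_pow (f : smoothPeriodic) (k : ℕ) (n : ℤ) :
    fourierCoef ((derivOp ^ k) f) n = (I * n) ^ k * fourierCoef f n := by
  induction k with
  | zero => simp
  | succ k ih =>
    have hper : Function.Periodic ((derivOp ^ k) f : ℝ → ℂ) (2 * Real.pi) := ((derivOp ^ k) f).2.2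
    rw [pow_succ', pow_succ', mul_assoc, ← ih]
    exact fourierCoef_deriv (((derivOp ^ k) f).2.1.of_le (by simp)) hper.eq n

lemma summable_pow_mul_norm_fourierCoef (f : smoothPeriodic) (k : ℕ) :
    Summable fun n : ℤ => |(n : ℝ)| ^ k * ‖fourierCoef f n‖ := by
  obtain ⟨M, hM⟩ : ∃ M, ∀ n, ‖fourierCoef ((derivOp ^ (k + 2)) f) n‖ ≤ M :=
    ⟨_, norm_fourierCoef_le _⟩
  have hs : Summable fun n : ℤ => M * (1 / (n : ℝ) ^ 2) :=
    (Real.summable_one_div_int_pow.2 one_lt_two).mul_left M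
  refine hs.of_norm_bounded_eventually ?_
  filter_upwards [(Set.finite_singleton (0 : ℤ)).compl_mem_cofinite] with n hn
  have hn' : (0 : ℝ) < |(n : ℝ)| := by simpa using hn
  have h := hM n
  rw [fourierCoef_derivOp_pow, norm_mul, norm_pow, norm_mul, norm_I, one_mul, norm_intCast] at h
  rw [Real.norm_of_nonneg (by positivity), mul_one_div, ← sq_abs, le_div_iff₀ (by positivity)]
  calc |(n : ℝ)| ^ k * ‖fourierCoef f n‖ * |(n : ℝ)| ^ 2
      = |(n : ℝ)| ^ (k + 2) * ‖fourierCoef f n‖ := by ring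
    _ ≤ M := h

lemma summable_fourierCoef (f : smoothPeriodic) : Summable (fourierCoef f) :=
  .of_norm (by simpa using summable_pow_mul_norm_fourierCoef f 0)

lemma eq_tsum_fourierCoef (f : smoothPeriodic) (x : ℝ) :
    (f : ℝ → ℂ) x = ∑' n : ℤ, fourierCoef f n * exp (I * n * x) :=
  (hasSum_fourierCoef_mul_exp (continuous f) f.2.2 (summable_fourierCoef f) x).tsum_eq.symm

lemma ext_fourierCoef {f g : smoothPeriodic} (h : ∀ n, fourierCoef f n = fourierCoef g n) :
    f = g :=
  Subtype.ext <| funext fun x => by simp only [eq_tsum_fourierCoef, h]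

lemma tsum_mul_exp_mem {a : ℤ → ℂ} (ha : ∀ k : ℕ, Summable fun n : ℤ => |(n : ℝ)| ^ k * ‖a n‖) :
    (fun x : ℝ => ∑' n : ℤ, a n * exp (I * n * x)) ∈ smoothPeriodic := by
  refine ⟨?_, fun x => tsum_congr fun n =>
    congrArg (a n * ·) (exp_I_mul_intCast_mul_periodic n x)⟩
  refine contDiff_tsum (N := (⊤ : ℕ∞)) (v := fun k (n : ℤ) => |(n : ℝ)| ^ k * ‖a n‖)
    (fun n => ?_) (fun k _ => ha k) (fun k n x _ => ?_)
  · exact contDiff_const.mul ((contDiff_const.mul ofRealCLM.contDiff).cexp)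
  · rw [norm_iteratedFDeriv_eq_norm_iteratedDeriv, iteratedDeriv_const_mul_exp]
    simp only [norm_mul, norm_pow, norm_exp_I_mul_intCast_mul, norm_I, one_mul, mul_one,
      norm_intCast]
    exact (mul_comm _ _).le

lemma summable_pow_mul_norm_mul_fourierCoef {m : ℤ → ℂ} {M : ℝ} (hm : ∀ n, ‖m n‖ ≤ M)
    (f : smoothPeriodic) (k : ℕ) :
    Summable fun n : ℤ => |(n : ℝ)| ^ k * ‖m n * fourierCoef f n‖ := by
  refine .of_nonneg_of_le (fun _ => by positivity) (fun n => ?_)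
    ((summable_pow_mul_norm_fourierCoef f k).mul_left M)
  rw [norm_mul, mul_left_comm]
  gcongr
  exact hm n

lemma summable_mul_fourierCoef_mul_exp {m : ℤ → ℂ} {M : ℝ} (hm : ∀ n, ‖m n‖ ≤ M)
    (f : smoothPeriodic) (x : ℝ) :
    Summable fun n : ℤ => m n * fourierCoef f n * exp (I * n * x) :=
  .of_norm <| by
    simpa [norm_exp_I_mul_intCast_mul] using summable_pow_mul_norm_mul_fourierCoef hm f 0

/-- The Fourier multiplier with bounded symbol `m`, that is `e^{inx} ↦ m n · e^{inx}`. -/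
noncomputable def multiplier {m : ℤ → ℂ} {M : ℝ} (hm : ∀ n, ‖m n‖ ≤ M) :
    Module.End ℂ smoothPeriodic where
  toFun f := ⟨fun x => ∑' n : ℤ, m n * fourierCoef f n * exp (I * n * x),
    tsum_mul_exp_mem (summable_pow_mul_norm_mul_fourierCoef hm f)⟩
  map_add' f g := Subtype.ext <| funext fun x => by
    simp only [AddMemClass.coe_add, Pi.add_apply, fourierCoef_add (continuous f) (continuous g),
      mul_add, add_mul]
    exact (summable_mul_fourierCoef_mul_exp hm f x).tsum_add
      (summable_mul_fourierCoef_mul_exp hm g x)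
  map_smul' c f := Subtype.ext <| funext fun x => by
    simp only [SetLike.val_smul, Pi.smul_apply, fourierCoef_smul, mul_left_comm _ c, mul_assoc c,
      tsum_mul_left, RingHom.id_apply, smul_eq_mul]

lemma fourierCoef_multiplier {m : ℤ → ℂ} {M : ℝ} (hm : ∀ n, ‖m n‖ ≤ M) (f : smoothPeriodic)
    (n : ℤ) : fourierCoef (multiplier hm f) n = m n * fourierCoef f n :=
  fourierCoef_tsum_mul_exp
    (.of_norm (by simpa using summable_pow_mul_norm_mul_fourierCoef hm f 0)) n

lemma norm_neg_I_mul_sign_le_one (n : ℤ) : ‖-I * (n.sign : ℂ)‖ ≤ 1 := by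
  rcases lt_trichotomy n 0 with h | rfl | h
  · simp [Int.sign_eq_neg_one_of_neg h]
  · simp
  · simp [Int.sign_eq_one_of_pos h]

/-- The Hilbert transform `HilbT` as an endomorphism of the smooth periodic functions. -/
noncomputable def hilbert : Module.End ℂ smoothPeriodic :=
  multiplier norm_neg_I_mul_sign_le_one

/-- The projection `Pminus` as an endomorphism of the smooth periodic functions. -/
noncomputable def negProj : Module.End ℂ smoothPeriodic :=
  multiplier (m := fun n => if n < 0 then 1 else 0) (M := 1) fun n => by split_ifs <;> simp

lemma coe_negProj (f : smoothPeriodic) : (negProj f : ℝ → ℂ) = Pminus f :=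
  funext fun x => tsum_congr fun n => by
    by_cases hn : n < 0 <;> simp [hn]

/-- The linear part `i·P₋∂ₓ` of the Matsuno recursion. -/
noncomputable def iPminusDeriv : Module.End ℂ smoothPeriodic :=
  I • (negProj * derivOp)

lemma coe_iPminusDeriv (f : smoothPeriodic) :
    (iPminusDeriv f : ℝ → ℂ) = I • Pminus (deriv f) :=
  congrArg (I • ·) (coe_negProj (derivOp f))

/-- The operator `Lam a b s`, that is `(a + b·H)∂ₓ^s`, as an endomorphism of the smooth periodic
functions. -/
noncomputable def lam (a b : ℂ) (s : ℕ) : Module.End ℂ smoothPeriodic :=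
  (a • 1 + b • hilbert) * derivOp ^ s

lemma coe_lam (a b : ℂ) (s : ℕ) (u : smoothPeriodic) : (lam a b s u : ℝ → ℂ) = Lam a b s u := by
  funext x
  rw [Lam, ← coe_derivOp_pow]
  rfl

lemma lam_mul_left (c a b : ℂ) (s : ℕ) : lam (c * a) (c * b) s = c • lam a b s := by
  rw [lam, lam, mul_smul, mul_smul, ← smul_add, smul_mul_assoc]

lemma fourierCoef_lam (a b : ℂ) (s : ℕ) (u : smoothPeriodic) (n : ℤ) :
    fourierCoef (lam a b s u) n =
      (a + b * (-I * n.sign)) * (I * n) ^ s * fourierCoef u n := by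
  set v := (derivOp ^ s) u with hv
  change fourierCoef (a • (v : ℝ → ℂ) + b • (hilbert v : ℝ → ℂ)) n = _
  rw [fourierCoef_add ((continuous v).const_smul a) ((continuous (hilbert v)).const_smul b),
    fourierCoef_smul, fourierCoef_smul, hilbert, fourierCoef_multiplier, hv,
    fourierCoef_derivOp_pow]
  ring

lemma lam_mul_lam (a b a' b' : ℂ) {s t : ℕ} (h : s + t ≠ 0) :
    lam a b s * lam a' b' t = lam (a * a' - b * b') (a * b' + b * a') (s + t) := by
  refine LinearMap.ext fun u => ext_fourierCoef fun n => ?_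
  rw [Module.End.mul_apply, fourierCoef_lam, fourierCoef_lam, fourierCoef_lam]
  obtain rfl | hn := eq_or_ne n 0
  · rw [Int.cast_zero, mul_zero, zero_pow h]
    rcases (by lia : s ≠ 0 ∨ t ≠ 0) with hs | ht
    · simp [hs]
    · simp [ht]
  · have hsign : (n.sign : ℂ) * n.sign = 1 := by
      rw [← Int.cast_mul, ← Int.sign_mul, Int.sign_eq_one_of_pos (mul_self_pos.2 hn), Int.cast_one]
    have hsymbol : (-I * n.sign : ℂ) * (-I * n.sign) = -1 := by
      linear_combination I_mul_I + I * I * hsign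
    linear_combination b * b' * (I * n) ^ (s + t) * fourierCoef u n * hsymbol

lemma iPminusDeriv_eq_lam : iPminusDeriv = lam (I / 2) (1 / 2) 1 := by
  refine LinearMap.ext fun u => ext_fourierCoef fun n => ?_
  have hderiv := fourierCoef_derivOp_pow u 1 n
  rw [pow_one, pow_one] at hderiv
  change fourierCoef (I • (negProj (derivOp u) : ℝ → ℂ)) n = _
  rw [fourierCoef_smul, negProj, fourierCoef_multiplier, hderiv, fourierCoef_lam]
  rcases lt_trichotomy n 0 with h | rfl | h
  · rw [if_pos h, Int.sign_eq_neg_one_of_neg h]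
    push_cast
    ring
  · simp
  · rw [if_neg h.not_gt, Int.sign_eq_one_of_pos h]
    push_cast
    ring

lemma exists_iPminusDeriv_pow_eq_lam (n : ℕ) : ∃ a b, iPminusDeriv ^ n = lam a b n := by
  induction n with
  | zero => exact ⟨1, 0, by simp [lam]⟩
  | succ n ih =>
    obtain ⟨a, b, h⟩ := ih
    exact ⟨_, _, by rw [pow_succ, h, iPminusDeriv_eq_lam, lam_mul_lam _ _ _ _ n.succ_ne_zero]⟩

/-- Integration over one period. -/
noncomputable def periodIntegral : smoothPeriodic →ₗ[ℂ] ℂ where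
  toFun f := ∫ x in (0:ℝ)..(2 * Real.pi), (f : ℝ → ℂ) x
  map_add' f g := intervalIntegral.integral_add ((continuous f).intervalIntegrable _ _)
    ((continuous g).intervalIntegrable _ _)
  map_smul' c _ := intervalIntegral.integral_smul c _

lemma periodIntegral_mul_eq_tsum (f g : smoothPeriodic) :
    periodIntegral (f * g) =
      ∑' n : ℤ, fourierCoef g n * (2 * Real.pi * fourierCoef f (-n)) := by
  rw [(hasSum_integral_mul_tsum (summable_fourierCoef g) (continuous f)).tsum_eq]
  simp only [← eq_tsum_fourierCoef]
  rfl

lemma periodIntegral_mul_lam (a b : ℂ) (s : ℕ) (f g : smoothPeriodic) :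
    periodIntegral (f * lam a b s g) =
      periodIntegral (lam ((-1) ^ s * a) (-(-1) ^ s * b) s f * g) := by
  rw [periodIntegral_mul_eq_tsum, periodIntegral_mul_eq_tsum]
  refine tsum_congr fun n => ?_
  have hneg : (I * (-n : ℤ)) ^ s = (-1) ^ s * (I * n) ^ s := by
    rw [← mul_pow]; push_cast; ring
  have hsq : ((-1 : ℂ) ^ s) * (-1) ^ s = 1 := by rw [← mul_pow]; norm_num
  rw [fourierCoef_lam, fourierCoef_lam, hneg, Int.sign_neg]
  push_cast
  linear_combination (-(a + b * (-I * n.sign)) * (I * n) ^ s * fourierCoef g n *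
    (2 * Real.pi * fourierCoef f (-n))) * hsq

lemma exists_periodIntegral_lam_mul_iPminusDeriv_pow (a b : ℂ) (s l : ℕ) :
    ∃ a' b', ∀ u f : smoothPeriodic, periodIntegral (lam a b s u * (iPminusDeriv ^ l) f) =
      periodIntegral (lam a' b' (l + s) u * f) := by
  obtain rfl | hl := eq_or_ne l 0
  · exact ⟨a, b, fun _ _ => by rw [zero_add, pow_zero, Module.End.one_apply]⟩
  · obtain ⟨a', b', h⟩ := exists_iPminusDeriv_pow_eq_lam l
    exact ⟨_, _, fun u f => by
      rw [h, periodIntegral_mul_lam, ← Module.End.mul_apply, lam_mul_lam _ _ _ _ (by lia)]⟩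

lemma exists_periodIntegral_lam_mul_iPminusDeriv_pow_mul (c₁ c₂ : ℂ) (j l m n : ℕ) :
    ∃ a b : Fin 3 → ℂ, ∀ u : smoothPeriodic,
      periodIntegral (lam c₁ c₂ j u *
        (iPminusDeriv ^ l) ((iPminusDeriv ^ m) u * (iPminusDeriv ^ n) u)) =
      periodIntegral (lam (a 0) (b 0) (l + j) u * lam (a 1) (b 1) m u * lam (a 2) (b 2) n u) := by
  obtain ⟨a₀, b₀, h₀⟩ := exists_periodIntegral_lam_mul_iPminusDeriv_pow c₁ c₂ j l
  obtain ⟨a₁, b₁, h₁⟩ := exists_iPminusDeriv_pow_eq_lam m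
  obtain ⟨a₂, b₂, h₂⟩ := exists_iPminusDeriv_pow_eq_lam n
  exact ⟨![a₀, a₁, a₂], ![b₀, b₁, b₂], fun u => by rw [h₀, h₁, h₂, ← mul_assoc]; rfl⟩

end smoothPeriodic

section QuadraticPart

open smoothPeriodic

lemma iteratedDeriv_eval_ofReal (q : ℂ[X]) (n : ℕ) :
    iteratedDeriv n (fun t : ℝ => q.eval (t : ℂ)) =
      fun t : ℝ => (derivative^[n] q).eval (t : ℂ) := by
  induction n with
  | zero => rfl
  | succ n ih =>
    funext t
    rw [iteratedDeriv_succ, ih, Function.iterate_succ_apply']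
    exact ((derivative^[n] q).hasDerivAt (t : ℂ)).comp_ofReal.deriv

lemma iteratedDeriv_eval_ofReal_zero (q : ℂ[X]) (n : ℕ) :
    iteratedDeriv n (fun t : ℝ => q.eval (t : ℂ)) 0 = n.factorial * q.coeff n := by
  simp only [iteratedDeriv_eval_ofReal, ofReal_zero, ← coeff_zero_eq_eval_zero,
    coeff_iterate_derivative, zero_add, Nat.descFactorial_self, nsmul_eq_mul]

lemma matsunoW_smul_eq_eval (u : smoothPeriodic) (n : ℕ) (t : ℂ) :
    matsunoW (t • (u : ℝ → ℂ)) n =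
      ((matsunoPoly iPminusDeriv u n).eval (algebraMap ℂ smoothPeriodic t) : smoothPeriodic) := by
  rw [eval_algebraMap_matsunoPoly, matsunoW_eq_matsunoSeq]
  exact (map_matsunoSeq ℂ smoothPeriodic.val (D := iPminusDeriv)
    (D' := fun f => I • Pminus (deriv f)) coe_iPminusDeriv (t • u) n).symm

lemma wQuad_eq_coeff_two (u : smoothPeriodic) (n : ℕ) :
    wQuad u n = ((matsunoPoly iPminusDeriv u n).coeff 2 : smoothPeriodic) := by
  funext x
  let φ : smoothPeriodic →+* ℂ := (Pi.evalRingHom (fun _ : ℝ => ℂ) x).comp smoothPeriodic.subtype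
  have h : (fun t : ℝ => matsunoW (fun y => (t : ℂ) * (u : ℝ → ℂ) y) n x) =
      fun t : ℝ => ((matsunoPoly iPminusDeriv u n).map φ).eval (t : ℂ) := funext fun t => by
    rw [eval_map]
    exact (congrFun (matsunoW_smul_eq_eval u n t) x).trans (eval₂_at_apply φ _).symm
  rw [wQuad, h, iteratedDeriv_eval_ofReal_zero, coeff_map, Nat.factorial_two, Nat.cast_two,
    mul_div_cancel_left₀ _ two_ne_zero]
  rfl

lemma integral_Lam_mul_wQuad (c₁ c₂ : ℂ) (j k : ℕ) (u : smoothPeriodic) :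
    ∫ x in (0:ℝ)..(2 * Real.pi), Lam c₁ c₂ j u x * wQuad u (k + 2) x =
      ∑ p ∈ antidiagonal k, ∑ q ∈ antidiagonal p.2,
        periodIntegral (lam (1 / 2 * c₁) (1 / 2 * c₂) j u *
          (iPminusDeriv ^ p.1) ((iPminusDeriv ^ q.1) u * (iPminusDeriv ^ q.2) u)) := by
  rw [wQuad_eq_coeff_two, ← coe_lam]
  change periodIntegral (lam c₁ c₂ j u * _) = _
  simp only [coeff_two_matsunoPoly_eq_sum, lam_mul_left, LinearMap.smul_apply, mul_smul_comm,
    smul_mul_assoc, map_sum, Finset.mul_sum, map_smul, Finset.smul_sum]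

theorem stmt_15_general (j : ℕ) (c₁ c₂ : ℂ) (k : ℕ) (hk : 2 ≤ k) :
    ∃ (I : Finset ℕ) (e : ℕ → Fin 3 → ℕ) (a b : ℕ → Fin 3 → ℂ),
      (∀ i ∈ I, e i 0 + e i 1 + e i 2 = k + j - 2) ∧
      ∀ u : ℝ → ℂ, ContDiff ℝ (⊤ : ℕ∞) u → (∀ x, u (x + 2 * Real.pi) = u x) →
        (∫ x in (0:ℝ)..(2 * Real.pi), Lam c₁ c₂ j u x * wQuad u k x)
          = ∑ i ∈ I, ∫ x in (0:ℝ)..(2 * Real.pi),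
              Lam (a i 0) (b i 0) (e i 0) u x * Lam (a i 1) (b i 1) (e i 1) u x *
                Lam (a i 2) (b i 2) (e i 2) u x := by
  obtain ⟨k, rfl⟩ := Nat.exists_eq_add_of_le' hk
  choose a b h using exists_periodIntegral_lam_mul_iPminusDeriv_pow_mul (1 / 2 * c₁) (1 / 2 * c₂) j
  let φ : ℕ ≃ (_ : ℕ × ℕ) × ℕ × ℕ := (Denumerable.eqv _).symm
  let T : Finset ((_ : ℕ × ℕ) × ℕ × ℕ) := (antidiagonal k).sigma fun p => antidiagonal p.2
  refine ⟨T.map φ.symm.toEmbedding, fun i => ![(φ i).1.1 + j, (φ i).2.1, (φ i).2.2],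
    fun i => a (φ i).1.1 (φ i).2.1 (φ i).2.2, fun i => b (φ i).1.1 (φ i).2.1 (φ i).2.2,
    fun i hi => ?_, fun u hu hper => ?_⟩
  · have hi : φ i ∈ T := by simpa using hi
    obtain ⟨hp, hq⟩ := Finset.mem_sigma.1 hi
    rw [Finset.HasAntidiagonal.mem_antidiagonal] at hp hq
    simp only [Matrix.cons_val]
    lia
  · lift u to smoothPeriodic using ⟨hu, hper⟩
    rw [integral_Lam_mul_wQuad, Finset.sum_map, Finset.sum_sigma]
    simp only [h, Equiv.coe_toEmbedding, Equiv.apply_symm_apply, Matrix.cons_val, ← coe_lam]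
    rfl

end QuadraticPart


/-- for every `j ≥ 0`, all `c₁, c₂ ∈ ℂ` and every `k ≥ 2`, there are a
finite index set `I` and, for `i ∈ I`, exponents `e_i : Fin 3 → ℕ` with
`e_i 0 + e_i 1 + e_i 2 = k + j − 2` and constants `a_i, b_i : Fin 3 → ℂ` such that for
every smooth `2π`-periodic zero-mean `u`:
`∫₀^{2π} ((c₁+c₂H)∂ₓ^j u)·w_k^Q(u) dx
  = Σ_{i∈I} ∫₀^{2π} ∏_{r<3} ((a_i r + b_i r·H)∂ₓ^{e_i r} u) dx`. -/
theorem stmt_15 (j : ℕ) (c₁ c₂ : ℂ) (k : ℕ) (hk : 2 ≤ k) :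
    ∃ (I : Finset ℕ) (e : ℕ → Fin 3 → ℕ) (a b : ℕ → Fin 3 → ℂ),
      (∀ i ∈ I, e i 0 + e i 1 + e i 2 = k + j - 2) ∧
      ∀ u : ℝ → ℂ, ContDiff ℝ (⊤ : ℕ∞) u → (∀ x, u (x + 2 * Real.pi) = u x) →
        (∫ x in (0:ℝ)..(2 * Real.pi), u x) = 0 →
        (∫ x in (0:ℝ)..(2 * Real.pi), Lam c₁ c₂ j u x * wQuad u k x)
          = ∑ i ∈ I, ∫ x in (0:ℝ)..(2 * Real.pi),
              Lam (a i 0) (b i 0) (e i 0) u x * Lam (a i 1) (b i 1) (e i 1) u x *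
                Lam (a i 2) (b i 2) (e i 2) u x := by
  obtain ⟨I, e, a, b, he, h⟩ := stmt_15_general j c₁ c₂ k hk
  exact ⟨I, e, a, b, he, fun u hu hper _ => h u hu hper⟩
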